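/- Let t be a positive integer, let M be a matroid with a t-cyclic ordering e_1, e_2, …, e_n, and suppose n ≥ 2t. (i) If t is odd (so the ordering is odd t-cyclic), then for all odd i ∈ {1,…,n}, the set {e_i, e_{i+1}, …, e_{i+t−1}} is coindependent in M (independent in M*) and the set {e_{i+1}, e_{i+2}, …, e_{i+t}} is independent in M. (ii) If t is even (so the ordering is even t-cyclic), then for all odd i ∈ {1,…,n}, the set {e_{i+1}, e_{i+2}, …, e_{i+t}} is both independent and coindependent in M. -/

import Mathlib

open Set

namespace CyclicArr

variable {α : Type*}

/-- `C` is a circuit of the matroid `M`: a minimal dependent set. -/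
def Cct (M : Matroid α) (C : Set α) : Prop := Minimal M.Dep C

/-- The set of `len` consecutive elements `{e_i, e_{i+1}, …, e_{i+len-1}}`
in a cyclic ordering `e`, subscripts mod `n`. -/
def seg {n : ℕ} (e : ZMod n → α) (i : ℤ) (len : ℕ) : Set α :=
  (fun k : ℕ => e ((i + k : ℤ) : ZMod n)) '' Set.Iio len

/-- `e` is a cyclic ordering of (the ground set of) `M`. -/
def CyclicOrd {n : ℕ} (M : Matroid α) (e : ZMod n → α) : Prop :=
  Function.Injective e ∧ Set.range e = M.E

/-- `e` is a cyclic `(t-1, t)`-ordering of `M`: every `t-1` consecutive elements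
are contained in a `t`-element circuit and a `t`-element cocircuit. -/
def CyclicPropOrd {n : ℕ} (M : Matroid α) (t : ℕ) (e : ZMod n → α) : Prop :=
  CyclicOrd M e ∧
  ∀ i : ℤ, (∃ C, Cct M C ∧ C.ncard = t ∧ seg e i (t-1) ⊆ C) ∧
           (∃ C, Cct M✶ C ∧ C.ncard = t ∧ seg e i (t-1) ⊆ C)

/-- `M` has the cyclic `(t-1, t)`-property: it admits a cyclic `(t-1, t)`-ordering. -/
def HasCycProp (M : Matroid α) (t : ℕ) : Prop :=
  ∃ (n : ℕ) (e : ZMod n → α), CyclicPropOrd M t e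

/-- `e` is an odd `t`-cyclic ordering of `M` (with `n ≥ t+1`): for all odd `i ∈ {1,…,n}`,
`{e_i, …, e_{i+t-1}}` is a `t`-element circuit and `{e_{i+1}, …, e_{i+t}}` is a
`t`-element cocircuit. -/
def OddTCycOrd {n : ℕ} (M : Matroid α) (t : ℕ) (e : ZMod n → α) : Prop :=
  CyclicOrd M e ∧ t + 1 ≤ n ∧
  ∀ i : ℕ, Odd i → 1 ≤ i → i ≤ n →
    (Cct M (seg e (i : ℤ) t) ∧ (seg e (i : ℤ) t).ncard = t) ∧
    (Cct M✶ (seg e ((i : ℤ) + 1) t) ∧ (seg e ((i : ℤ) + 1) t).ncard = t)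

/-- `e` is an even `t`-cyclic ordering of `M` (with `n ≥ t+1`): for all odd `i ∈ {1,…,n}`,
`{e_i, …, e_{i+t-1}}` is both a `t`-element circuit and a `t`-element cocircuit. -/
def EvenTCycOrd {n : ℕ} (M : Matroid α) (t : ℕ) (e : ZMod n → α) : Prop :=
  CyclicOrd M e ∧ t + 1 ≤ n ∧
  ∀ i : ℕ, Odd i → 1 ≤ i → i ≤ n →
    Cct M (seg e (i : ℤ) t) ∧ Cct M✶ (seg e (i : ℤ) t) ∧ (seg e (i : ℤ) t).ncard = t

/-- `M` is `t`-cyclic: it admits an odd or even `t`-cyclic ordering. -/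
def TCyclic (M : Matroid α) (t : ℕ) : Prop :=
  ∃ (n : ℕ) (e : ZMod n → α), OddTCycOrd M t e ∨ EvenTCycOrd M t e

/-- The rank of a set `X` in a matroid `M`: the maximum cardinality of an
independent subset of `X` (for a finite matroid). -/
noncomputable def rkf (M : Matroid α) (X : Set α) : ℕ :=
  sSup {k | ∃ I, M.Indep I ∧ I ⊆ X ∧ I.ncard = k}

/-- The connectivity function `λ(X) = r(X) + r*(X) - |X|`, valued in `ℤ`. -/
noncomputable def lam (M : Matroid α) (X : Set α) : ℤ :=
  (rkf M X : ℤ) + (rkf M✶ X : ℤ) - (X.ncard : ℤ)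

/-- The local connectivity `⊓(X, Y) = r(X) + r(Y) - r(X ∪ Y)`, valued in `ℤ`. -/
noncomputable def pic (M : Matroid α) (X Y : Set α) : ℤ :=
  (rkf M X : ℤ) + (rkf M Y : ℤ) - (rkf M (X ∪ Y) : ℤ)

/-- `X` is exactly `k`-separating: `λ(X) = k - 1`. -/
noncomputable def ExactSep (M : Matroid α) (k : ℕ) (X : Set α) : Prop :=
  lam M X = (k : ℤ) - 1

/-- `(P_1, …, P_m)` is a concatenation of the cyclic ordering `e`, where `P i` is the
block of `l i` consecutive elements starting at position `a i`, and the blocks occur in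
cyclic order and partition the ground set. -/
def IsConcat {n m : ℕ} (e : ZMod n → α) (P : ZMod m → Set α) (a l : ZMod m → ℕ) : Prop :=
  (∀ i, 1 ≤ l i) ∧
  (∀ i, ((a (i + 1) : ZMod n)) = ((a i + l i : ℕ) : ZMod n)) ∧
  (∀ i, P i = seg e (a i : ℤ) (l i)) ∧
  Set.univ.PairwiseDisjoint P ∧
  (⋃ i, P i) = Set.range e

/-- `(P_1, …, P_m)` is a `k`-flower of `M`: a partition of the ground set into nonempty
sets, each exactly `k`-separating, with consecutive unions exactly `k`-separating. -/
noncomputable def IsFlower (M : Matroid α) (k : ℕ) {m : ℕ} (P : ZMod m → Set α) : Prop :=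
  2 ≤ m ∧
  Set.univ.PairwiseDisjoint P ∧ (⋃ i, P i) = M.E ∧
  (∀ i, (P i).Nonempty) ∧
  (∀ i, ExactSep M k (P i)) ∧
  (3 ≤ m → ∀ i, ExactSep M k (P i ∪ P (i + 1)))

/-- `I ⊆ ZMod m` is a set of consecutive members in the cyclic order. -/
def CycInterval {m : ℕ} (I : Set (ZMod m)) : Prop :=
  ∃ (a : ZMod m) (len : ℕ), 0 < len ∧ I = (fun k : ℕ => a + (k : ZMod m)) '' Set.Iio len

/-- A `k`-daisy: a `k`-flower in which the union of a proper nonempty collection of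
petals is exactly `k`-separating precisely when the petals are consecutive. -/
noncomputable def IsDaisy (M : Matroid α) (k : ℕ) {m : ℕ} (P : ZMod m → Set α) : Prop :=
  IsFlower M k P ∧
  ∀ I : Set (ZMod m), I.Nonempty → I ≠ Set.univ →
    (ExactSep M k (⋃ i ∈ I, P i) ↔ CycInterval I)

/-- A `k`-anemone: a `k`-flower in which the union of every proper nonempty collection
of petals is exactly `k`-separating. -/
noncomputable def IsAnemone (M : Matroid α) (k : ℕ) {m : ℕ} (P : ZMod m → Set α) : Prop :=
  IsFlower M k P ∧
  ∀ I : Set (ZMod m), I.Nonempty → I ≠ Set.univ → ExactSep M k (⋃ i ∈ I, P i)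

/-!
Suppose `{e_{p+1}, …, e_{p+t}}` is a circuit and `{e_{p-t+1}, …, e_p}` is a cocircuit. Then
`{e_{p+1}, …, e_{p+t-1}}` is independent, being a proper subset of the circuit. Adding `e_p` keeps
it independent: a circuit of `{e_p, …, e_{p+t-1}}` through `e_p` would meet the cocircuit in `e_p`
alone, since the `2t - 1` positions involved do not wrap around the cycle. The same orthogonality
forces `n` to be even, so circuits and cocircuits occur at every integer position of the right
parity and this argument, with its dual, applies at all the positions required.
-/

lemma indep_insert_of_inter_isCocircuit_eq_singleton {M : Matroid α} {S D : Set α} {x : α}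
    (hS : M.Indep S) (hD : M.IsCocircuit D) (hx : insert x S ∩ D = {x}) :
    M.Indep (insert x S) := by
  have hxD : x ∈ D := (hx.symm.subset rfl).2
  have hground : insert x S ⊆ M.E :=
    insert_subset (hD.subset_ground hxD) hS.subset_ground
  by_contra hdep
  obtain ⟨C, hCsub, hC⟩ := ((Matroid.not_indep_iff hground).1 hdep).exists_isCircuit_subset
  have hxC : x ∈ C := by
    by_contra hxC
    exact hC.not_indep (hS.subset ((subset_insert_iff_of_notMem hxC).1 hCsub))
  have hCD : C ∩ D = {x} :=
    (hx ▸ inter_subset_inter_left D hCsub).antisymm (singleton_subset_iff.2 ⟨hxC, hxD⟩)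
  exact hC.inter_isCocircuit_ne_singleton hD hCD

lemma exists_odd_natCast_eq_intCast {n : ℕ} (hpos : 0 < n) (hn : Even n) {z : ℤ} (hz : Odd z) :
    ∃ i : ℕ, Odd i ∧ i ≤ n ∧ (i : ZMod n) = z := by
  have : NeZero n := ⟨hpos.ne'⟩
  refine ⟨(z : ZMod n).val, ?_, (ZMod.val_lt _).le, ZMod.natCast_zmod_val _⟩
  have h2n : (2 : ℤ) ∣ n := mod_cast hn.two_dvd
  rw [← Int.odd_coe_nat, Int.odd_iff, ZMod.val_intCast, Int.emod_emod_of_dvd z h2n]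
  exact Int.odd_iff.1 hz

section Seg

variable {n : ℕ} {e : ZMod n → α}

lemma seg_congr {i j : ℤ} (h : (i : ZMod n) = j) (len : ℕ) : seg e i len = seg e j len := by
  simp only [seg, Int.cast_add, h]

lemma seg_eq_image_Ico (e : ZMod n → α) (p : ℤ) (len : ℕ) :
    seg e p len = (fun k : ℤ => e k) '' Ico p (p + len) := by
  ext x
  constructor
  · rintro ⟨k, hk, rfl⟩
    have hk : k < len := hk
    exact ⟨p + k, ⟨by omega, by omega⟩, rfl⟩
  · rintro ⟨k, ⟨hpk, hk⟩, rfl⟩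
    refine ⟨(k - p).toNat, mem_Iio.2 (by omega), ?_⟩
    simp only [Int.toNat_sub_of_le hpk, add_sub_cancel]

lemma injOn_intCast_Ico (he : Function.Injective e) (p : ℤ) :
    InjOn (fun k : ℤ => e k) (Ico p (p + n)) := by
  rintro i ⟨hpi, hi⟩ j ⟨hpj, hj⟩ hij
  have hdvd : (n : ℤ) ∣ j - i := (ZMod.intCast_eq_intCast_iff_dvd_sub i j n).1 (he hij)
  have hzero : j - i = 0 :=
    Int.eq_zero_of_abs_lt_dvd hdvd (abs_lt.2 ⟨by omega, by omega⟩)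
  omega

lemma seg_succ_left (e : ZMod n → α) (p : ℤ) (len : ℕ) :
    seg e p (len + 1) = insert (e p) (seg e (p + 1) len) := by
  have hIco : Ico p (p + (len + 1 : ℕ)) = insert p (Ico (p + 1) (p + 1 + len)) := by
    ext; simp only [mem_Ico, mem_insert_iff]; omega
  rw [seg_eq_image_Ico, seg_eq_image_Ico, hIco, image_insert_eq]

lemma seg_ssubset_seg_succ (he : Function.Injective e) (p : ℤ) {len : ℕ} (hlen : len < n) :
    seg e p len ⊂ seg e p (len + 1) := by
  have hIco : Ico p (p + len) ⊂ Ico p (p + (len + 1 : ℕ)) :=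
    ssubset_iff_insert.2 ⟨p + len, right_notMem_Ico,
      insert_subset ⟨by omega, by omega⟩ (Ico_subset_Ico_right (by omega))⟩
  have hsub : Ico p (p + (len + 1 : ℕ)) ⊆ Ico p (p + n) := Ico_subset_Ico_right (by omega)
  rw [seg_eq_image_Ico, seg_eq_image_Ico,
    (injOn_intCast_Ico he p).image_ssubset_image_iff (hIco.subset.trans hsub) hsub]
  exact hIco

lemma seg_inter_seg_eq_singleton (he : Function.Injective e) (p : ℤ) {r s : ℕ} (hrs : r + s < n) :
    seg e p (s + 1) ∩ seg e (p - r) (r + 1) = {e p} := by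
  have hIco : Ico p (p + (s + 1 : ℕ)) ∩ Ico (p - r) (p - r + (r + 1 : ℕ)) = {p} := by
    ext; simp only [mem_inter_iff, mem_Ico, mem_singleton_iff]; omega
  have hright : Ico p (p + (s + 1 : ℕ)) ⊆ Ico (p - r) (p - r + n) :=
    Ico_subset_Ico (by omega) (by omega)
  have hleft : Ico (p - r) (p - r + (r + 1 : ℕ)) ⊆ Ico (p - r) (p - r + n) :=
    Ico_subset_Ico le_rfl (by omega)
  rw [seg_eq_image_Ico, seg_eq_image_Ico,
    ← (injOn_intCast_Ico he (p - r)).image_inter hright hleft, hIco, image_singleton]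

lemma indep_seg_of_isCircuit_of_isCocircuit {M : Matroid α} (he : Function.Injective e) {p : ℤ}
    {r s : ℕ} (hrs : r + s < n) (hC : M.IsCircuit (seg e (p + 1) (s + 1)))
    (hD : M.IsCocircuit (seg e (p - r) (r + 1))) : M.Indep (seg e p (s + 1)) := by
  have hinter := seg_inter_seg_eq_singleton he p hrs
  rw [seg_succ_left] at hinter ⊢
  exact indep_insert_of_inter_isCocircuit_eq_singleton
    (hC.ssubset_indep (seg_ssubset_seg_succ he (p + 1) (by omega))) hD hinter

end Seg

/-- The common form of an odd `t`-cyclic ordering with `t` odd and an even `t`-cyclic ordering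
with `t` even: the cocircuits start `t % 2` places after the circuits, so that both parities of `t`
are treated at once. The labelling `e` is not required to exhaust the ground set. -/
structure ParityTCycOrd {n : ℕ} (M : Matroid α) (t : ℕ) (e : ZMod n → α) : Prop where
  injective : Function.Injective e
  lt_card : t < n
  isCircuit (i : ℕ) : Odd i → i ≤ n → M.IsCircuit (seg e i t)
  isCocircuit (i : ℕ) : Odd i → i ≤ n → M.IsCocircuit (seg e (i + (t % 2 : ℕ)) t)

section Parity

variable {n t : ℕ} {M : Matroid α} {e : ZMod n → α}

lemma OddTCycOrd.parityTCycOrd (h : OddTCycOrd M t e) (ht : Odd t) : ParityTCycOrd M t e where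
  injective := h.1.1
  lt_card := h.2.1
  isCircuit i hi hin := (h.2.2 i hi hi.pos hin).1.1
  isCocircuit i hi hin := by
    rw [Nat.odd_iff.1 ht]
    exact (h.2.2 i hi hi.pos hin).2.1

lemma EvenTCycOrd.parityTCycOrd (h : EvenTCycOrd M t e) (ht : Even t) : ParityTCycOrd M t e where
  injective := h.1.1
  lt_card := h.2.1
  isCircuit i hi hin := (h.2.2 i hi hi.pos hin).1
  isCocircuit i hi hin := by
    rw [Nat.even_iff.1 ht, Nat.cast_zero, add_zero]
    exact (h.2.2 i hi hi.pos hin).2.1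

namespace ParityTCycOrd

lemma exists_eq_succ (h : ParityTCycOrd M t e) : ∃ s, t = s + 1 := by
  refine Nat.exists_eq_succ_of_ne_zero ?_
  rintro rfl
  obtain ⟨-, k, hk, -⟩ := (h.isCircuit 1 odd_one h.lt_card).nonempty
  exact Nat.not_lt_zero k hk

lemma even_card (h : ParityTCycOrd M t e) (hn : 2 * t ≤ n + 1) : Even n := by
  obtain ⟨s, rfl⟩ := h.exists_eq_succ
  by_contra hodd
  rw [Nat.not_even_iff_odd] at hodd
  -- For odd `n` there is a cocircuit starting at `n + t % 2`, that is at `t % 2` modulo `n`;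
  -- it ends at the odd position `t - 1 + t % 2`, where a circuit starts.
  have hC := h.isCircuit (s + (s + 1) % 2) (Nat.odd_iff.2 (by omega)) (by omega)
  have hD := h.isCocircuit n hodd le_rfl
  have hwrap : (((n : ℤ) + ((s + 1) % 2 : ℕ) : ℤ) : ZMod n) =
      (((s + (s + 1) % 2 : ℕ) : ℤ) - s : ℤ) := by
    simp
  rw [seg_congr hwrap] at hD
  exact hC.inter_isCocircuit_ne_singleton hD
    (seg_inter_seg_eq_singleton h.injective _ (by omega))

lemma isCircuit_seg_of_odd (h : ParityTCycOrd M t e) (hn : Even n) {z : ℤ} (hz : Odd z) :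
    M.IsCircuit (seg e z t) := by
  obtain ⟨i, hi, hin, hiz⟩ := exists_odd_natCast_eq_intCast (Nat.zero_lt_of_lt h.lt_card) hn hz
  rw [← seg_congr (i := i) (mod_cast hiz)]
  exact h.isCircuit i hi hin

lemma isCocircuit_seg_of_odd_add (h : ParityTCycOrd M t e) (hn : Even n) {z : ℤ}
    (hz : Odd (z + t)) : M.IsCocircuit (seg e z t) := by
  have hodd : Odd (z - (t % 2 : ℕ)) := by
    rw [Int.odd_iff] at hz ⊢
    omega
  obtain ⟨i, hi, hin, hiz⟩ :=
    exists_odd_natCast_eq_intCast (Nat.zero_lt_of_lt h.lt_card) hn hodd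
  have hcast : ((i + (t % 2 : ℕ) : ℤ) : ZMod n) = z := by
    rw [Int.cast_add, Int.cast_natCast, hiz, ← Int.cast_add, sub_add_cancel]
  rw [← seg_congr hcast]
  exact h.isCocircuit i hi hin

lemma indep_seg_of_even (h : ParityTCycOrd M t e) (hn : 2 * t ≤ n + 1) {p : ℤ} (hp : Even p) :
    M.Indep (seg e p t) := by
  have hn_even := h.even_card hn
  obtain ⟨s, rfl⟩ := h.exists_eq_succ
  refine indep_seg_of_isCircuit_of_isCocircuit h.injective (r := s) (by omega)
    (h.isCircuit_seg_of_odd hn_even hp.add_one) (h.isCocircuit_seg_of_odd_add hn_even ?_)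
  convert hp.add_one using 1
  push_cast
  ring

lemma coindep_seg_of_even_add (h : ParityTCycOrd M t e) (hn : 2 * t ≤ n + 1) {p : ℤ}
    (hp : Even (p + t)) : M✶.Indep (seg e p t) := by
  have hn_even := h.even_card hn
  obtain ⟨s, rfl⟩ := h.exists_eq_succ
  rw [Int.even_iff] at hp
  refine indep_seg_of_isCircuit_of_isCocircuit h.injective (r := s) (by omega)
    (h.isCocircuit_seg_of_odd_add hn_even (Int.odd_iff.2 (by omega))) ?_
  rw [Matroid.dual_isCocircuit_iff]
  exact h.isCircuit_seg_of_odd hn_even (Int.odd_iff.2 (by omega))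

end ParityTCycOrd

end Parity

/-- Let `e` be a `t`-cyclic ordering with `n ≥ 2t`. (i) If `t` is odd
(odd ordering), then for all odd `i ∈ {1,…,n}`, `{e_i,…,e_{i+t-1}}` is coindependent and
`{e_{i+1},…,e_{i+t}}` is independent. (ii) If `t` is even (even ordering), then for all
odd `i ∈ {1,…,n}`, `{e_{i+1},…,e_{i+t}}` is both independent and coindependent. -/
theorem statement_10 (M : Matroid α) (t n : ℕ) (ht : 1 ≤ t) (hn : 2 * t ≤ n)
    (e : ZMod n → α) :
    (Odd t → OddTCycOrd M t e →
      ∀ i : ℕ, Odd i → 1 ≤ i → i ≤ n →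
        M✶.Indep (seg e (i : ℤ) t) ∧ M.Indep (seg e ((i : ℤ) + 1) t)) ∧
    (Even t → EvenTCycOrd M t e →
      ∀ i : ℕ, Odd i → 1 ≤ i → i ≤ n →
        M.Indep (seg e ((i : ℤ) + 1) t) ∧ M✶.Indep (seg e ((i : ℤ) + 1) t)) := by
  have hn' : 2 * t ≤ n + 1 := by omega
  constructor
  · intro ht_odd hord i hi _ _
    have h := hord.parityTCycOrd ht_odd
    have hi : Odd (i : ℤ) := mod_cast hi
    have ht_odd : Odd (t : ℤ) := mod_cast ht_odd
    exact ⟨h.coindep_seg_of_even_add hn' (hi.add_odd ht_odd), h.indep_seg_of_even hn' hi.add_one⟩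
  · intro ht_even hord i hi _ _
    have h := hord.parityTCycOrd ht_even
    have hi : Even ((i : ℤ) + 1) := Odd.add_one (mod_cast hi)
    have ht_even : Even (t : ℤ) := mod_cast ht_even
    exact ⟨h.indep_seg_of_even hn' hi, h.coindep_seg_of_even_add hn' (hi.add ht_even)⟩

end CyclicArr
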